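/- Let T, k be natural numbers with k > 0, and let h, θ, η, w : ℕ → ℝ be real sequences satisfying, for every t with T < t ≤ T + k, the CFN component recurrence h(t) = θ(t) · tanh(h(t−1)) + η(t) · tanh(w(t)). Set Θ = max_{T ≤ t ≤ T+k} θ(t) and H = max_{T ≤ t ≤ T+k} η(t), and assume 0 ≤ θ(t) and 0 ≤ η(t) on this interval and Θ < 1. Then |h(T+k)| ≤ Θ^k · |h(T)| + ((1 − Θ^k)/(1 − Θ)) · H · max_{T ≤ t ≤ T+k} |w(t)|. -/

import Mathlib

/-!
Since `|tanh x| ≤ |x|`, one step of the recurrence gives `|h (t + 1)| ≤ Θ * |h t| + H * M`, where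
`M` is the maximum of `|w|`. The affine map `x ↦ Θ * x + H * M` has the fixed point
`H * M / (1 - Θ)`, and the amount by which `|h t|` exceeds it shrinks at least by the factor `Θ`
at every step.
-/

theorem abs_sinh_le_cosh_mul_abs (x : ℝ) : |Real.sinh x| ≤ Real.cosh x * |x| := by
  have deriv_le : ∀ y ∈ Metric.closedBall (0 : ℝ) |x|, ‖deriv Real.sinh y‖ ≤ Real.cosh x := by
    intro y hy
    rw [Real.deriv_sinh, Real.norm_of_nonneg (Real.cosh_pos y).le, Real.cosh_le_cosh]
    exact mem_closedBall_zero_iff.mp hy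
  simpa only [Real.sinh_zero, sub_zero, Real.norm_eq_abs] using
    Convex.norm_image_sub_le_of_norm_deriv_le (fun _ _ ↦ Real.differentiableAt_sinh) deriv_le
      (convex_closedBall 0 |x|) (Metric.mem_closedBall_self (abs_nonneg x))
      (mem_closedBall_zero_iff.mpr le_rfl)

theorem abs_tanh_le_abs (x : ℝ) : |Real.tanh x| ≤ |x| := by
  rw [Real.tanh_eq_sinh_div_cosh, abs_div, abs_of_pos (Real.cosh_pos x),
    div_le_iff₀' (Real.cosh_pos x)]
  exact abs_sinh_le_cosh_mul_abs x

theorem le_pow_mul_add_of_le_mul_add {u : ℕ → ℝ} {a b : ℝ} (ha : 0 ≤ a) (ha1 : a ≠ 1) (n : ℕ)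
    (hu : ∀ m < n, u (m + 1) ≤ a * u m + b) :
    u n ≤ a ^ n * u 0 + (1 - a ^ n) / (1 - a) * b := by
  have fixed_point : a * (b / (1 - a)) + b = b / (1 - a) := by
    field_simp [sub_ne_zero.mpr ha1.symm]
    ring
  have excess_le : u n - b / (1 - a) ≤ a ^ n * (u 0 - b / (1 - a)) :=
    le_geom (u := fun m ↦ u m - b / (1 - a)) ha n fun m hm ↦ by linarith [hu m hm]
  calc u n ≤ a ^ n * (u 0 - b / (1 - a)) + b / (1 - a) := sub_le_iff_le_add.mp excess_le
    _ = a ^ n * u 0 + (1 - a ^ n) / (1 - a) * b := by ring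

theorem norm_smul_add_smul_le {𝕜 E : Type*} [SeminormedRing 𝕜] [SeminormedAddCommGroup E]
    [Module 𝕜 E] [IsBoundedSMul 𝕜 E] {a b : 𝕜} {x y : E} {A B r s : ℝ}
    (ha : ‖a‖ ≤ A) (hb : ‖b‖ ≤ B) (hx : ‖x‖ ≤ r) (hy : ‖y‖ ≤ s) :
    ‖a • x + b • y‖ ≤ A * r + B * s :=
  norm_add_le_of_le
    ((norm_smul_le a x).trans (mul_le_mul ha hx (norm_nonneg x) ((norm_nonneg a).trans ha)))
    ((norm_smul_le b y).trans (mul_le_mul hb hy (norm_nonneg y) ((norm_nonneg b).trans hb)))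

theorem cfn_decay_estimate_sharp_general {E F : Type*} [SeminormedAddCommGroup E]
    [NormedSpace ℝ E] [SeminormedAddCommGroup F] {φ : E → E} {ψ : F → E}
    (hφ : ∀ x, ‖φ x‖ ≤ ‖x‖) (hψ : ∀ y, ‖ψ y‖ ≤ ‖y‖)
    (T k : ℕ) (h : ℕ → E) (θ η : ℕ → ℝ) (w : ℕ → F)
    (hrec : ∀ t, T < t → t ≤ T + k → h t = θ t • φ (h (t - 1)) + η t • ψ (w t))
    (hθ0 : ∀ t, T ≤ t → t ≤ T + k → 0 ≤ θ t)
    (hη0 : ∀ t, T ≤ t → t ≤ T + k → 0 ≤ η t)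
    (Θ H : ℝ)
    (hΘ : Θ = (Finset.Icc T (T + k)).sup'
      (Finset.nonempty_Icc.mpr (Nat.le_add_right T k)) θ)
    (hH : H = (Finset.Icc T (T + k)).sup'
      (Finset.nonempty_Icc.mpr (Nat.le_add_right T k)) η)
    (hΘ1 : Θ ≠ 1) :
    ‖h (T + k)‖ ≤ Θ ^ k * ‖h T‖ +
      ((1 - Θ ^ k) / (1 - Θ)) * H * ((Finset.Icc T (T + k)).sup'
        (Finset.nonempty_Icc.mpr (Nat.le_add_right T k)) (fun t => ‖w t‖)) := by
  set M := (Finset.Icc T (T + k)).sup' _ (fun t => ‖w t‖)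
  have norm_θ_le : ∀ t ∈ Finset.Icc T (T + k), ‖θ t‖ ≤ Θ := fun t ht ↦ by
    obtain ⟨hTt, htk⟩ := Finset.mem_Icc.mp ht
    exact (Real.norm_of_nonneg (hθ0 t hTt htk)).trans_le (hΘ ▸ Finset.le_sup' θ ht)
  have norm_η_le : ∀ t ∈ Finset.Icc T (T + k), ‖η t‖ ≤ H := fun t ht ↦ by
    obtain ⟨hTt, htk⟩ := Finset.mem_Icc.mp ht
    exact (Real.norm_of_nonneg (hη0 t hTt htk)).trans_le (hH ▸ Finset.le_sup' η ht)
  have norm_w_le : ∀ t ∈ Finset.Icc T (T + k), ‖w t‖ ≤ M := fun t ht ↦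
    Finset.le_sup' (fun t ↦ ‖w t‖) ht
  have Θ_nonneg : 0 ≤ Θ :=
    (norm_nonneg _).trans (norm_θ_le T (Finset.left_mem_Icc.mpr (Nat.le_add_right T k)))
  have norm_h_succ_le : ∀ m < k, ‖h (T + (m + 1))‖ ≤ Θ * ‖h (T + m)‖ + H * M := fun m hm ↦ by
    have ht : T + (m + 1) ∈ Finset.Icc T (T + k) := Finset.mem_Icc.mpr (by lia)
    rw [hrec (T + (m + 1)) (by lia) (by lia)]
    exact norm_smul_add_smul_le (norm_θ_le _ ht) (norm_η_le _ ht) (hφ _)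
      ((hψ _).trans (norm_w_le _ ht))
  rw [mul_assoc]
  exact le_pow_mul_add_of_le_mul_add (u := fun m ↦ ‖h (T + m)‖) Θ_nonneg hΘ1 k norm_h_succ_le

/-- Sharper intermediate inequality from the proof of Lemma 1 of the paper:
under the CFN component recurrence on `(T, T+k]`, with nonnegative gates on
`[T, T+k]` and maximal forget-gate value `Θ < 1`,
`|h (T+k)| ≤ Θ^k * |h T| + ((1 - Θ^k)/(1 - Θ)) * H * max_{T ≤ t ≤ T+k} |w t|`. -/
theorem cfn_decay_estimate_sharp (T k : ℕ) (hk : 0 < k) (h θ η w : ℕ → ℝ)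
    (hrec : ∀ t, T < t → t ≤ T + k →
      h t = θ t * Real.tanh (h (t - 1)) + η t * Real.tanh (w t))
    (hθ0 : ∀ t, T ≤ t → t ≤ T + k → 0 ≤ θ t)
    (hη0 : ∀ t, T ≤ t → t ≤ T + k → 0 ≤ η t)
    (Θ H : ℝ)
    (hΘ : Θ = (Finset.Icc T (T + k)).sup'
      (Finset.nonempty_Icc.mpr (Nat.le_add_right T k)) θ)
    (hH : H = (Finset.Icc T (T + k)).sup'
      (Finset.nonempty_Icc.mpr (Nat.le_add_right T k)) η)
    (hΘ1 : Θ < 1) :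
    |h (T + k)| ≤ Θ ^ k * |h T| +
      ((1 - Θ ^ k) / (1 - Θ)) * H * ((Finset.Icc T (T + k)).sup'
        (Finset.nonempty_Icc.mpr (Nat.le_add_right T k)) (fun t => |w t|)) :=
  cfn_decay_estimate_sharp_general abs_tanh_le_abs abs_tanh_le_abs T k h θ η w hrec hθ0 hη0 Θ H
    hΘ hH hΘ1.ne
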